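/- Let g : [0,∞) → ℝ be convex, nondecreasing, with g(0) = 0. Let μ be the probability measure on ℝ with density 1 on [−1/2, 1/2], and let ν be the probability measure on ℝ with density 1/2 on [−2,−1] ∪ [1,2]. Define Y : ℝ → ℝ by Y(x) = 2x − 1 for x < 0 and Y(x) = 2x + 1 for x ≥ 0, and define ψ(y) = 2 g((1+|y|)/2) and φ(x) = g(1+|x|). Then: (i) Y pushes μ forward to ν, i.e., Y_#μ = ν; (ii) for all x, y ∈ ℝ, ψ(y) − φ(x) ≤ g(|y − x|), with equality when y = Y(x); and (iii) consequently, the plan π_Y = (id, Y)_#μ minimizes ∫ g(|y − x|) dπ over all π ∈ Π(μ,ν), and the minimal value equals ∫_{−1/2}^{1/2} g(1+|x|) dx. -/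

import Mathlib

/-!
The proof is Kantorovich duality with an explicit pair of potentials. Midpoint convexity and
monotonicity of `g`, together with `|y| ≤ |x| + |y - x|`, give
`2 g((1 + |y|)/2) ≤ g(1 + |x|) + g(|y - x|)`. Since `|Y x| = 1 + 2|x|` and `|Y x - x| = 1 + |x|`,
this is an equality on the graph of `Y`. Integrating the inequality against a plan `π`
with marginals `μ₀` and `ν₀ = Y_# μ₀` yields the optimality of `(id, Y)_# μ₀`
(`integral_cost_ge`).

The pushforward identity is checked on each half-line, where `Y` is affine of slope `2`
(`map_affine_restrict`). Every integrand is a nonnegative, measurable (because `g` is monotone) and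
almost surely bounded function, so all integrals converge (`integrable_comp_of_bdd`).
-/

open MeasureTheory Set

noncomputable section

/-- The source measure: density `1` on `[-1/2, 1/2]`. -/
def μ₀ : Measure ℝ := volume.restrict (Icc (-(1:ℝ)/2) (1/2))

/-- The target measure: density `1/2` on `[-2,-1] ∪ [1,2]`. -/
def ν₀ : Measure ℝ := (1/2 : ENNReal) • volume.restrict (Icc (-2:ℝ) (-1) ∪ Icc 1 2)

/-- The Monge map `Y`. -/
def Ymap (x : ℝ) : ℝ := if x < 0 then 2*x - 1 else 2*x + 1

lemma abs_Ymap (x : ℝ) : |Ymap x| = 1 + 2 * |x| := by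
  unfold Ymap
  split_ifs with h
  · rw [abs_of_neg h, abs_of_neg (by linarith)]; ring
  · rw [not_lt] at h
    rw [abs_of_nonneg h, abs_of_nonneg (by linarith)]; ring

lemma abs_Ymap_sub (x : ℝ) : |Ymap x - x| = 1 + |x| := by
  unfold Ymap
  split_ifs with h
  · rw [abs_of_neg h, abs_of_neg (by linarith)]; ring
  · rw [not_lt] at h
    rw [abs_of_nonneg h, abs_of_nonneg (by linarith)]; ring

lemma measurable_Ymap : Measurable Ymap :=
  Measurable.ite measurableSet_Iio (by fun_prop) (by fun_prop)

lemma map_affine_restrict (c : ℝ) {t : Set ℝ} (ht : MeasurableSet t) :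
    (volume.restrict ((fun x : ℝ => 2 * x + c) ⁻¹' t)).map (fun x : ℝ => 2 * x + c) =
      (1/2 : ENNReal) • volume.restrict t := by
  have hf : Measurable (fun x : ℝ => 2 * x + c) := by fun_prop
  rw [← Measure.restrict_map hf ht]
  have h : (volume : Measure ℝ).map (fun x : ℝ => 2 * x + c) = (1/2 : ENNReal) • volume := by
    have h2 : (fun x : ℝ => 2 * x + c) = (fun x => x + c) ∘ (fun x => 2 * x) := rfl
    rw [h2, ← Measure.map_map (by fun_prop) (by fun_prop),
      Real.map_volume_mul_left (two_ne_zero), Measure.map_smul,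
      map_add_right_eq_self]
    congr 1
    rw [abs_of_pos (by norm_num), ENNReal.ofReal_inv_of_pos two_pos]
    simp
  rw [h, Measure.restrict_smul]

lemma map_Ymap : μ₀.map Ymap = ν₀ := by
  have hsplit : μ₀ = volume.restrict ((fun x : ℝ => 2 * x + (-1)) ⁻¹' Ico (-2) (-1)) +
      volume.restrict ((fun x : ℝ => 2 * x + 1) ⁻¹' Icc 1 2) := by
    rw [← Measure.restrict_union, μ₀]
    · congr 1
      ext x
      simp only [mem_Icc, mem_union, mem_preimage, mem_Ico]
      constructor
      · rintro ⟨h1, h2⟩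
        rcases lt_or_ge x 0 with h | h
        · left; constructor <;> linarith
        · right; constructor <;> linarith
      · rintro (⟨h1, h2⟩ | ⟨h1, h2⟩) <;> constructor <;> linarith
    · rw [Set.disjoint_left]
      simp only [mem_Icc, mem_preimage, mem_Ico]
      rintro x ⟨h1, h2⟩ ⟨h3, h4⟩
      linarith
    · exact measurableSet_Icc.preimage (by fun_prop)
  have hneg : (volume.restrict ((fun x : ℝ => 2 * x + (-1)) ⁻¹' Ico (-2) (-1))).map Ymap =
      (1/2 : ENNReal) • volume.restrict (Ico (-2) (-1)) := by
    rw [← map_affine_restrict (-1) measurableSet_Ico]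
    apply Measure.map_congr
    filter_upwards [ae_restrict_mem (measurableSet_Ico.preimage (by fun_prop))] with x hx
    simp only [mem_preimage, mem_Ico] at hx
    rw [Ymap, if_pos (by linarith [hx.2])]
    ring
  have hpos : (volume.restrict ((fun x : ℝ => 2 * x + 1) ⁻¹' Icc 1 2)).map Ymap =
      (1/2 : ENNReal) • volume.restrict (Icc 1 2) := by
    rw [← map_affine_restrict 1 measurableSet_Icc]
    apply Measure.map_congr
    filter_upwards [ae_restrict_mem (measurableSet_Icc.preimage (by fun_prop))] with x hx
    simp only [mem_preimage, mem_Icc] at hx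
    rw [Ymap, if_neg (by linarith [hx.1])]
  rw [hsplit, Measure.map_add _ _ measurable_Ymap, hneg, hpos,
    Measure.restrict_congr_set Ico_ae_eq_Icc, ν₀, Measure.restrict_union _ measurableSet_Icc,
    smul_add]
  rw [Set.disjoint_left]
  rintro x ⟨h1, h2⟩ ⟨h3, h4⟩
  linarith

lemma potential_le {g : ℝ → ℝ} (hgconv : ConvexOn ℝ (Ici 0) g)
    (hgmono : MonotoneOn g (Ici 0)) (x y : ℝ) :
    2 * g ((1 + |y|)/2) - g (1 + |x|) ≤ g |y - x| := by
  have hx := abs_nonneg x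
  have hy := abs_nonneg y
  have hyx := abs_nonneg (y - x)
  have htri : |y| ≤ |x| + |y - x| := by
    have := abs_add_le x (y - x)
    rwa [add_sub_cancel] at this
  have hx1 : 1 + |x| ∈ Ici (0:ℝ) := by simp only [mem_Ici]; linarith
  have h1 := hgconv.2 hx1 (mem_Ici.2 hyx) (show (0:ℝ) ≤ 1/2 by norm_num)
    (show (0:ℝ) ≤ 1/2 by norm_num) (by norm_num)
  simp only [smul_eq_mul] at h1
  have h2 : g ((1 + |y|)/2) ≤ g (1/2 * (1 + |x|) + 1/2 * |y - x|) :=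
    hgmono (by simp only [mem_Ici]; linarith) (by simp only [mem_Ici]; linarith) (by linarith)
  linarith

lemma potential_eq (g : ℝ → ℝ) (x : ℝ) :
    2 * g ((1 + |Ymap x|)/2) - g (1 + |x|) = g |Ymap x - x| := by
  rw [abs_Ymap, abs_Ymap_sub, show (1 + (1 + 2 * |x|)) / 2 = 1 + |x| by ring]
  ring

/-- Monotone functions on `ℝ` are measurable, and `g` agrees on `[0, ∞)` with the monotone function
`t ↦ g (max t 0)`; its values elsewhere are arbitrary, so `u` has to be nonnegative. -/
lemma measurable_comp_of_monotoneOn {α : Type*} [MeasurableSpace α] {g : ℝ → ℝ}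
    (hgmono : MonotoneOn g (Ici 0)) {u : α → ℝ} (hu : Measurable u) (hu0 : ∀ a, 0 ≤ u a) :
    Measurable fun a => g (u a) := by
  have hG : Monotone fun t : ℝ => g (max t 0) := fun s t hst =>
    hgmono (mem_Ici.2 (le_max_right _ _)) (mem_Ici.2 (le_max_right _ _)) (max_le_max_right 0 hst)
  have : (fun a => g (u a)) = (fun t : ℝ => g (max t 0)) ∘ u := by
    ext a
    simp [max_eq_left (hu0 a)]
  rw [this]
  exact hG.measurable.comp hu

lemma integrable_comp_of_bdd {α : Type*} [MeasurableSpace α] {m : Measure α} [IsFiniteMeasure m]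
    {g : ℝ → ℝ} (hgmono : MonotoneOn g (Ici 0)) (hg0 : g 0 = 0)
    {u : α → ℝ} (hu : Measurable u) (hu0 : ∀ a, 0 ≤ u a) {C : ℝ} (hC : ∀ᵐ a ∂m, u a ≤ C) :
    Integrable (fun a => g (u a)) m := by
  refine Integrable.of_bound
    (measurable_comp_of_monotoneOn hgmono hu hu0).aestronglyMeasurable (g C) ?_
  filter_upwards [hC] with a ha
  have h0 : 0 ≤ g (u a) := hg0 ▸ hgmono (mem_Ici.2 le_rfl) (hu0 a) (hu0 a)
  rw [Real.norm_of_nonneg h0]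
  exact hgmono (hu0 a) ((hu0 a).trans ha) ha

lemma ae_μ₀ : ∀ᵐ x ∂μ₀, |x| ≤ 1/2 := by
  unfold μ₀
  filter_upwards [ae_restrict_mem measurableSet_Icc] with x hx
  rw [abs_le]
  constructor <;> linarith [hx.1, hx.2]

lemma integral_plan {g : ℝ → ℝ} (hgmono : MonotoneOn g (Ici 0)) :
    (∫ p : ℝ × ℝ, g |p.2 - p.1| ∂(μ₀.map fun x => (x, Ymap x))) =
      ∫ x, g (1 + |x|) ∂μ₀ := by
  rw [integral_map (measurable_id'.prodMk measurable_Ymap).aemeasurable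
    (measurable_comp_of_monotoneOn hgmono (by fun_prop)
      fun p => abs_nonneg _).aestronglyMeasurable]
  simp only [abs_Ymap_sub]

/-- Weak duality: the cost of any plan is at least the dual value
`∫ ψ dν₀ - ∫ φ dμ₀ = ∫ (ψ ∘ Y - φ) dμ₀`, which equals `∫ g(1 + |x|) dμ₀`. -/
lemma integral_cost_ge {g : ℝ → ℝ} (hgconv : ConvexOn ℝ (Ici 0) g)
    (hgmono : MonotoneOn g (Ici 0)) (hg0 : g 0 = 0) (π : Measure (ℝ × ℝ))
    [IsProbabilityMeasure π] (h1 : π.map Prod.fst = μ₀) (h2 : π.map Prod.snd = ν₀) :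
    ∫ x, g (1 + |x|) ∂μ₀ ≤ ∫ p : ℝ × ℝ, g |p.2 - p.1| ∂π := by
  have hae1 : ∀ᵐ p ∂π, |p.1| ≤ 1/2 :=
    ae_of_ae_map (f := Prod.fst) measurable_fst.aemeasurable (h1 ▸ ae_μ₀)
  have hν : ∀ᵐ y ∂ν₀, |y| ≤ 2 := by
    rw [← map_Ymap, ae_map_iff measurable_Ymap.aemeasurable
      (measurableSet_le (by fun_prop) (by fun_prop))]
    filter_upwards [ae_μ₀] with x hx
    rw [abs_Ymap]
    linarith
  have hae2 : ∀ᵐ p ∂π, |p.2| ≤ 2 :=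
    ae_of_ae_map (f := Prod.snd) measurable_snd.aemeasurable (h2 ▸ hν)
  have iφ : Integrable (fun p : ℝ × ℝ => g (1 + |p.1|)) π :=
    integrable_comp_of_bdd hgmono hg0 (by fun_prop) (fun p => by positivity) (C := 3/2)
      (by filter_upwards [hae1] with p hp; linarith)
  have iψ : Integrable (fun p : ℝ × ℝ => 2 * g ((1 + |p.2|)/2)) π :=
    (integrable_comp_of_bdd hgmono hg0 (by fun_prop) (fun p => by positivity) (C := 3/2)
      (by filter_upwards [hae2] with p hp; linarith)).const_mul 2
  have ic : Integrable (fun p : ℝ × ℝ => g |p.2 - p.1|) π :=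
    integrable_comp_of_bdd hgmono hg0 (by fun_prop) (fun p => abs_nonneg _) (C := 5/2)
      (by filter_upwards [hae1, hae2] with p hp1 hp2; linarith [abs_sub p.2 p.1])
  have mφ : Measurable fun x : ℝ => g (1 + |x|) :=
    measurable_comp_of_monotoneOn hgmono (by fun_prop) (fun p => by positivity)
  have mψ : Measurable fun y : ℝ => 2 * g ((1 + |y|)/2) :=
    (measurable_comp_of_monotoneOn hgmono (by fun_prop) (fun p => by positivity)).const_mul 2
  have eφ : ∫ p : ℝ × ℝ, g (1 + |p.1|) ∂π = ∫ x, g (1 + |x|) ∂μ₀ := by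
    rw [← h1, integral_map measurable_fst.aemeasurable mφ.aestronglyMeasurable]
  have eψ : ∫ p : ℝ × ℝ, 2 * g ((1 + |p.2|)/2) ∂π = 2 * ∫ x, g (1 + |x|) ∂μ₀ := by
    rw [← integral_map (f := fun y : ℝ => 2 * g ((1 + |y|)/2)) measurable_snd.aemeasurable
        mψ.aestronglyMeasurable, h2, ← map_Ymap,
      integral_map measurable_Ymap.aemeasurable mψ.aestronglyMeasurable, ← integral_const_mul]
    refine integral_congr_ae (.of_forall fun x => ?_)
    simp only [abs_Ymap]
    rw [show (1 + (1 + 2 * |x|)) / 2 = 1 + |x| by ring]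
  calc ∫ x, g (1 + |x|) ∂μ₀
      = ∫ p : ℝ × ℝ, (2 * g ((1 + |p.2|)/2) - g (1 + |p.1|)) ∂π := by
        rw [integral_sub iψ iφ, eφ, eψ]; ring
    _ ≤ _ := integral_mono (iψ.sub iφ) ic fun p => potential_le hgconv hgmono p.1 p.2

theorem one_dimensional_convex_example
    (g : ℝ → ℝ) (hgconv : ConvexOn ℝ (Ici 0) g)
    (hgmono : MonotoneOn g (Ici 0)) (hg0 : g 0 = 0) :
    -- (i) Y pushes μ forward to ν
    μ₀.map Ymap = ν₀ ∧
    -- (ii) the Kantorovich constraint, with equality along the graph of Y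
    (∀ x y : ℝ, 2 * g ((1 + |y|)/2) - g (1 + |x|) ≤ g |y - x|) ∧
    (∀ x : ℝ, 2 * g ((1 + |Ymap x|)/2) - g (1 + |x|) = g |Ymap x - x|) ∧
    -- (iii) the plan (id, Y)_#μ is optimal, with value ∫_{-1/2}^{1/2} g(1+|x|) dx
    (∀ π : Measure (ℝ × ℝ), IsProbabilityMeasure π →
      π.map Prod.fst = μ₀ → π.map Prod.snd = ν₀ →
      (∫ p : ℝ × ℝ, g |p.2 - p.1| ∂(μ₀.map fun x => (x, Ymap x))) ≤
        ∫ p : ℝ × ℝ, g |p.2 - p.1| ∂π) ∧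
    (∫ p : ℝ × ℝ, g |p.2 - p.1| ∂(μ₀.map fun x => (x, Ymap x))) =
      ∫ x in Icc (-(1:ℝ)/2) (1/2), g (1 + |x|) := by
  refine ⟨map_Ymap, potential_le hgconv hgmono, potential_eq g, fun π hπ h1 h2 => ?_,
    integral_plan hgmono⟩
  rw [integral_plan hgmono]
  exact integral_cost_ge hgconv hgmono hg0 π h1 h2
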